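/- Let M be a C-minimal structure and let F = {f_u : u ∈ U} and G = {g_{u'} : u' ∈ U'} be nice families of functions with the same domain V and absorbing element e, such that G is derivable relative to F. Let a'_1, a'_2, a'_3 be elements of U' such that C(a'_1, a'_2, a'_3), and let a_i := ∂_{F,G}(a'_i) for i = 1,2,3. Then either C(a_1, a_2, a_3) or a_1 = a_3. -/

import Mathlib

open FirstOrder Set

universe u

namespace CMinPaper

variable {M : Type u}

/-- The axioms of a (dense) C-relation. -/
def IsCRelation (C : M → M → M → Prop) : Prop :=
  (∀ x y z, C x y z → C x z y) ∧
  (∀ x y z, C x y z → ¬ C y x z) ∧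
  (∀ x y z w, C x y z → C x w z ∨ C w y z) ∧
  (∀ x y, x ≠ y → ∃ z, z ≠ y ∧ C x y z)

/-- A cone (open ball). -/
def IsCone (C : M → M → M → Prop) (s : Set M) : Prop :=
  ∃ a b : M, a ≠ b ∧ s = {x | C a x b}

/-- A 0-level set (closed ball). -/
def IsClosedBall (C : M → M → M → Prop) (s : Set M) : Prop :=
  ∃ a b : M, s = {x | ¬ C x a b}

/-- A ball is a cone or a closed ball. -/
def IsBall (C : M → M → M → Prop) (s : Set M) : Prop :=
  IsCone C s ∨ IsClosedBall C s

/-- The node `a ∧ b` of the underlying tree, viewed as the closed ball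
`{z | ¬ C z a b}` of `M` it determines. -/
def node (C : M → M → M → Prop) (a b : M) : Set M := {x | ¬ C x a b}

/-- `Δ(x,y,z)`. -/
def Delta (C : M → M → M → Prop) (x y z : M) : Prop := ¬ C x y z ∧ ¬ C y x z

/-- The (unary) sets which are definable by a quantifier-free formula with
parameters using only `C` and equality.  A term is either the variable
(`Option.none`) or a parameter (`Option.some a`). -/
inductive QFDef (C : M → M → M → Prop) : Set M → Prop
  | atomC (t₁ t₂ t₃ : Option M) :
      QFDef C {x | C (t₁.getD x) (t₂.getD x) (t₃.getD x)}
  | atomEq (t₁ t₂ : Option M) : QFDef C {x | t₁.getD x = t₂.getD x}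
  | compl {s : Set M} : QFDef C s → QFDef C sᶜ
  | union {s t : Set M} : QFDef C s → QFDef C t → QFDef C (s ∪ t)

/-- The ternary relation interpreting the symbol `r`. -/
def interpC (L : FirstOrder.Language.{u, u}) (M : Type u) [L.Structure M]
    (r : L.Relations 3) : M → M → M → Prop :=
  fun a b c => Language.Structure.RelMap r ![a, b, c]

/-- `M` is C-minimal: in every elementarily equivalent structure, every
definable (with parameters) subset is quantifier-free definable using only
`C` and `=`. -/
def CMinimal (L : FirstOrder.Language.{u, u}) (M : Type u) [L.Structure M]
    (r : L.Relations 3) : Prop :=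
  ∀ (N : Type u) (SN : L.Structure N),
    letI := SN
    L.ElementarilyEquivalent M N →
      ∀ s : Set N, Set.Definable₁ (univ : Set N) L s → QFDef (interpC L N r) s

/-- The (model-theoretic) algebraic closure of a set of parameters. -/
def acl (L : FirstOrder.Language.{u, u}) (M : Type u) [L.Structure M] (A : Set M) : Set M :=
  {a | ∃ s : Set M, Set.Definable₁ A L s ∧ s.Finite ∧ a ∈ s}

/-- The Steinitz exchange property for the algebraic closure. -/
def HasExchange (L : FirstOrder.Language.{u, u}) (M : Type u) [L.Structure M] : Prop :=
  ∀ (A : Set M) (a b : M),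
    a ∈ acl L M (A ∪ {b}) → a ∉ acl L M A → b ∈ acl L M (A ∪ {a})

/-- `M` is geometric: acl has the exchange property in every elementarily
equivalent structure. -/
def Geometric (L : FirstOrder.Language.{u, u}) (M : Type u) [L.Structure M] : Prop :=
  ∀ (N : Type u) (SN : L.Structure N),
    letI := SN
    L.ElementarilyEquivalent M N → HasExchange L N

/-- `M` is trivial: in every elementarily equivalent structure the pregeometry
given by acl is trivial. -/
def TrivialGeometry (L : FirstOrder.Language.{u, u}) (M : Type u) [L.Structure M] : Prop :=
  ∀ (N : Type u) (SN : L.Structure N),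
    letI := SN
    L.ElementarilyEquivalent M N →
      ∀ A : Set N, acl L N A = ⋃ a ∈ A, acl L N {a}

/-- `M` is definably maximal: every definable family of cones which is linearly
ordered by inclusion has a non-empty intersection. -/
def DefinablyMaximal (L : FirstOrder.Language.{u, u}) (M : Type u) [L.Structure M]
    (r : L.Relations 3) : Prop :=
  ∀ (n : ℕ) (S : Set (Fin (n + 1) → M)) (P : Set (Fin n → M)),
    Set.Definable (univ : Set M) L S →
    (∀ p ∈ P, IsCone (interpC L M r) {x | Fin.snoc p x ∈ S}) →
    (∀ p ∈ P, ∀ q ∈ P,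
      {x | Fin.snoc p x ∈ S} ⊆ {x | Fin.snoc q x ∈ S} ∨
        {x | Fin.snoc q x ∈ S} ⊆ {x | Fin.snoc p x ∈ S}) →
    P.Nonempty → (⋂ p ∈ P, {x | Fin.snoc p x ∈ S}).Nonempty

/-- Leaves of the underlying tree are the singletons. -/
def IsLeafSet (s : Set M) : Prop := ∃ x : M, s = {x}

/-- The interval `(lo, hi)` of the branch `br c`, consisting of all nodes
(coded as the closed balls they determine) strictly between the endpoints.
`lo = none` denotes `-∞`; `lo = some p` denotes the node `c ∧ p`; `hi : M`
denotes the node `c ∧ hi` (the leaf `c` when `hi = c`).  The tree ordering is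
reverse inclusion of balls. -/
def branchInterval (C : M → M → M → Prop) (c : M) (lo : Option M) (hi : M) :
    Set (Set M) :=
  {B | (∃ s, B = node C c s) ∧ ¬ IsLeafSet B ∧
    (∀ p ∈ lo, B ⊂ node C c p) ∧ node C c hi ⊂ B}

/-- `I` is an interval of the branch `br c`. -/
def IsIntervalOn (C : M → M → M → Prop) (c : M) (I : Set (Set M)) : Prop :=
  ∃ (lo : Option M) (hi : M), I = branchInterval C c lo hi

/-- `I` is a bounded interval of `br c` (bounded from below and from above). -/
def IsBoundedInterval (C : M → M → M → Prop) (c : M) (I : Set (Set M)) : Prop :=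
  ∃ p hi : M, I = branchInterval C c (some p) hi ∧ ¬ IsLeafSet (node C c hi)

/-- `I` is an unbounded (i.e. not bounded) interval of `br c`. -/
def IsUnboundedInterval (C : M → M → M → Prop) (c : M) (I : Set (Set M)) :
    Prop :=
  IsIntervalOn C c I ∧ ¬ IsBoundedInterval C c I

/-- The relation on nodes coded by `S ⊆ M²` via `(s,t) ↦ (c ∧ s, d ∧ t)`. -/
def codedRel (C : M → M → M → Prop) (S : Set (Fin 2 → M)) (c d : M)
    (B B' : Set M) : Prop :=
  ∃ s t : M, ![s, t] ∈ S ∧ B = node C c s ∧ B' = node C d t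

/-- `S ⊆ M²` codes a bijection between the set `I` of nodes of `br c` and the
set `J` of nodes of `br d`. -/
def CodesBijectionBetween (C : M → M → M → Prop) (S : Set (Fin 2 → M))
    (c d : M) (I J : Set (Set M)) : Prop :=
  (∀ B B', codedRel C S c d B B' → B ∈ I ∧ B' ∈ J) ∧
  (∀ B ∈ I, ∃! B', B' ∈ J ∧ codedRel C S c d B B') ∧
  (∀ B' ∈ J, ∃! B, B ∈ I ∧ codedRel C S c d B B')

/-- Condition (NB): there is no definable bijection between a bounded interval
and an unbounded interval of branches of the underlying tree. -/
def NB (L : FirstOrder.Language.{u, u}) (M : Type u) [L.Structure M] (r : L.Relations 3) :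
    Prop :=
  ∀ (c d : M) (S : Set (Fin 2 → M)), Set.Definable (univ : Set M) L S →
    ∀ I J : Set (Set M),
      IsBoundedInterval (interpC L M r) c I →
      IsUnboundedInterval (interpC L M r) d J →
      ¬ CodesBijectionBetween (interpC L M r) S c d I J

/-- An infinite group definable in `M`: an infinite definable `G ⊆ Mⁿ`
together with a definable subset of `M^{3n}` which is the graph of a group
operation on `G`. -/
def DefinableInfiniteGroup (L : FirstOrder.Language.{u, u}) (M : Type u)
    [L.Structure M] : Prop :=
  ∃ (n : ℕ) (G : Set (Fin n → M)) (mul : (Fin n → M) → (Fin n → M) → Fin n → M)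
    (one : Fin n → M) (inv : (Fin n → M) → Fin n → M),
    Set.Definable (univ : Set M) L G ∧ G.Infinite ∧
    Set.Definable (univ : Set M) L
      {t : (Fin n ⊕ (Fin n ⊕ Fin n)) → M |
        t ∘ Sum.inl ∈ G ∧ t ∘ Sum.inr ∘ Sum.inl ∈ G ∧
          mul (t ∘ Sum.inl) (t ∘ Sum.inr ∘ Sum.inl) = t ∘ Sum.inr ∘ Sum.inr} ∧
    one ∈ G ∧ (∀ a ∈ G, ∀ b ∈ G, mul a b ∈ G) ∧
    (∀ a ∈ G, ∀ b ∈ G, ∀ c ∈ G, mul (mul a b) c = mul a (mul b c)) ∧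
    (∀ a ∈ G, mul one a = a ∧ mul a one = a) ∧
    (∀ a ∈ G, inv a ∈ G ∧ mul a (inv a) = one ∧ mul (inv a) a = one)

/-- `g` is a C-isomorphism from `A` onto `B`. -/
def CIsoOn (C : M → M → M → Prop) (A B : Set M) (g : M → M) : Prop :=
  Set.BijOn g A B ∧ ∀ x ∈ A, ∀ y ∈ A, ∀ z ∈ A, (C x y z ↔ C (g x) (g y) (g z))

/-- The relation `C_e(f,g,h)`. -/
def CeRel (C : M → M → M → Prop) (V : Set M) (e : M) (f g h : M → M) : Prop :=
  ∃ W : Set M, IsCone C W ∧ e ∈ W ∧ W ⊆ V ∧ ∀ x ∈ W \ {e}, C (f x) (g x) (h x)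

/-- The relation `(¬C)_e(f,g,h)`. -/
def NCeRel (C : M → M → M → Prop) (V : Set M) (e : M) (f g h : M → M) : Prop :=
  ∃ W : Set M, IsCone C W ∧ e ∈ W ∧ W ⊆ V ∧ ∀ x ∈ W \ {e}, ¬ C (f x) (g x) (h x)

/-- A function is definable on `V` if its graph over `V` is definable. -/
def DefinableFunOn (L : FirstOrder.Language.{u, u}) (M : Type u) [L.Structure M]
    (V : Set M) (g : M → M) : Prop :=
  Set.Definable (univ : Set M) L {t : Fin 2 → M | t 0 ∈ V ∧ g (t 0) = t 1}

/-- A nice family of functions `{f u : u ∈ U}` on the cone `V`, with absorbing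
element `e`. -/
structure NiceFamily (L : FirstOrder.Language.{u, u}) (M : Type u) [L.Structure M]
    (C : M → M → M → Prop) where
  U : Set M
  V : Set M
  e : M
  f : M → M → M
  coneU : IsCone C U
  coneV : IsCone C V
  he : e ∈ V
  definable : Set.Definable (univ : Set M) L
    {t : Fin 3 → M | t 0 ∈ U ∧ t 1 ∈ V ∧ f (t 0) (t 1) = t 2}
  auto : ∀ u ∈ U, CIsoOn C V V (f u)
  fixe : ∀ u ∈ U, f u e = e
  star : ∀ x ∈ V \ {e}, ∃ V' : Set M, V' ⊆ V ∧ IsCone C V' ∧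
    CIsoOn C U V' fun u => f u x

namespace NiceFamily

variable {L : FirstOrder.Language.{u, u}} [L.Structure M] {C : M → M → M → Prop}

/-- `f u` is tangent to `g` relatively to the family. -/
def Tangent (F : NiceFamily L M C) (u : M) (g : M → M) : Prop :=
  u ∈ F.U ∧ ∀ u' ∈ F.U, NCeRel C F.V F.e (F.f u) (F.f u') g

/-- The set `T_g` of indices of tangents to `g`. -/
def Tset (F : NiceFamily L M C) (g : M → M) : Set M := {u | F.Tangent u g}

/-- The set `Γ_{g,u}`. -/
def Gamma (F : NiceFamily L M C) (g : M → M) (u : M) : Set M :=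
  {y | y ∈ F.U ∧ CeRel C F.V F.e (F.f u) (F.f y) g}

/-- `g` is derivable relatively to the family: it has exactly one tangent. -/
def Derivable (F : NiceFamily L M C) (g : M → M) : Prop := ∃! u, F.Tangent u g

/-- `f u` is non-dilating. -/
def NonDilating (F : NiceFamily L M C) (u : M) : Prop :=
  NCeRel C F.V F.e (fun x => F.f u (F.f u x)) (F.f u) id

/-- `u₀` is an identity element for the family. -/
def HasIdentity (F : NiceFamily L M C) (u₀ : M) : Prop :=
  u₀ ∈ F.U ∧ ∀ x ∈ F.V, F.f u₀ x = x

end NiceFamily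

/-- Continuity on `A` with respect to the topology generated by the cones. -/
def ContinuousOnCones (C : M → M → M → Prop) (A : Set M) (g : M → M) : Prop :=
  ∀ x ∈ A, ∀ W : Set M, IsCone C W → g x ∈ W →
    ∃ W' : Set M, IsCone C W' ∧ x ∈ W' ∧ ∀ y ∈ W' ∩ A, g y ∈ W

/-!
`C x y z` says that `y` and `z` are closer to each other than to `x`. In a C-minimal structure a
definable set, or its complement, contains a punctured neighbourhood of `e`; hence if `f_u` is not
tangent to `g`, every tangent to `g` is strictly closer to `g` than `f_u` is, all along such a
neighbourhood. Let `g₁`, `g₂`, `g₃` be members of `G` whose indices satisfy `C`, and `f₁`, `f₂`,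
`f₃` their tangents, with `f₁ ≠ f₃`. Near `e`, `f₁` and `f₃` are respectively closer to `g₁` and
`g₃` than to each other, and `f₂` is at least as close to `g₂` as `f₃` is. The configuration
`C (g₁ x) (g₂ x) (g₃ x)` therefore passes to the tangents, and property (*) carries it back and
forth between values and indices.
-/

section CRelation

variable {C : M → M → M → Prop}

namespace IsCRelation

variable {x x' y z w : M}

theorem swap (hC : IsCRelation C) (h : C x y z) : C x z y :=
  hC.1 x y z h

theorem swap_iff (hC : IsCRelation C) : C x y z ↔ C x z y :=
  ⟨hC.swap, hC.swap⟩

theorem asymm (hC : IsCRelation C) (h : C x y z) : ¬ C y x z :=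
  hC.2.1 x y z h

theorem replace_middle_or_left (hC : IsCRelation C) (h : C x y z) (w : M) : C x w z ∨ C w y z :=
  hC.2.2.1 x y z w h

theorem exists_ne (hC : IsCRelation C) (h : x ≠ y) : ∃ z, z ≠ y ∧ C x y z :=
  hC.2.2.2 x y h

theorem irrefl_left (hC : IsCRelation C) : ¬ C x x y :=
  fun h => hC.asymm h h

theorem irrefl_right (hC : IsCRelation C) : ¬ C x y x :=
  fun h => hC.irrefl_left (hC.swap h)

theorem of_ne (hC : IsCRelation C) (h : x ≠ y) : C x y y := by
  obtain ⟨z, -, hz⟩ := hC.exists_ne h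
  exact (hC.replace_middle_or_left (hC.swap hz) y).resolve_right hC.irrefl_right

theorem diag_iff (hC : IsCRelation C) : C x y y ↔ x ≠ y :=
  ⟨fun h hxy => hC.irrefl_left (hxy ▸ h), hC.of_ne⟩

theorem trans (hC : IsCRelation C) (hxy : C w x y) (hyz : C w y z) : C w x z := by
  rcases hC.replace_middle_or_left (hC.swap hxy) z with hzx | hzyx
  · exact hC.swap hzx
  · rcases hC.replace_middle_or_left hyz x with hxz | hxyz
    · exact hxz
    · exact absurd (hC.swap hxyz) (hC.asymm (hC.swap hzyx))

theorem congr_left (hC : IsCRelation C) (hx : C y x x') (h : C x y z) : C x' y z := by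
  rcases hC.replace_middle_or_left h x' with hx' | hx'
  · exact absurd hx (hC.asymm (hC.swap (hC.trans hx' (hC.swap h))))
  · exact hx'

theorem of_approx (hC : IsCRelation C) {x₁ x₂ x₃ y₁ y₂ y₃ : M} (h : C y₁ y₂ y₃)
    (h₁ : C x₃ x₁ y₁) (h₂ : ¬ C x₂ x₃ y₂) (h₃ : C x₁ x₃ y₃) : C x₁ x₂ x₃ := by
  have hy₁ : C y₁ y₂ x₃ := hC.trans h (hC.swap (hC.congr_left h₁ h₃))
  have hx₁ : C x₁ x₃ y₂ := hC.congr_left (hC.swap h₁) (hC.swap hy₁)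
  have hx₂ : C x₁ x₂ y₂ := (hC.replace_middle_or_left hx₁ x₂).resolve_right h₂
  exact hC.trans hx₂ (hC.swap hx₁)

end IsCRelation

namespace IsCone

variable {W W' : Set M} {e : M}

theorem exists_eq_of_mem (hC : IsCRelation C) (hW : IsCone C W) (he : e ∈ W) :
    ∃ a, a ≠ e ∧ W = {x | C a x e} := by
  obtain ⟨a, b, -, rfl⟩ := hW
  have hab : C a e b := he
  refine ⟨a, ?_, ?_⟩
  · rintro rfl
    exact hC.irrefl_left hab
  · ext x
    exact ⟨fun hx => hC.trans hx (hC.swap hab), fun hx => hC.trans hx hab⟩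

theorem exists_mem_ne (hC : IsCRelation C) (hW : IsCone C W) (he : e ∈ W) : ∃ x ∈ W, x ≠ e := by
  obtain ⟨a, hae, rfl⟩ := hW.exists_eq_of_mem hC he
  obtain ⟨x, hxe, hx⟩ := hC.exists_ne hae
  exact ⟨x, hC.swap hx, hxe⟩

theorem subset_or_subset (hC : IsCRelation C) (hW : IsCone C W) (hW' : IsCone C W')
    (he : e ∈ W) (he' : e ∈ W') : W ⊆ W' ∨ W' ⊆ W := by
  obtain ⟨a, -, rfl⟩ := hW.exists_eq_of_mem hC he
  obtain ⟨b, -, rfl⟩ := hW'.exists_eq_of_mem hC he'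
  by_cases hab : C a b e
  · exact .inr fun x hx => (hC.replace_middle_or_left hab x).resolve_right (hC.asymm hx)
  · exact .inl fun x hx => (hC.replace_middle_or_left hx b).resolve_left hab

end IsCone

end CRelation

section PuncturedNhds

open Filter

variable {C : M → M → M → Prop}

/-- The filter of punctured neighbourhoods of `e` for the topology generated by the cones, along
which `C_e` and `(¬C)_e` are "eventually" statements. It is defined directly from the cones, since
the topology depends on `C` and so cannot be an instance on `M`. -/
def puncturedNhds (C : M → M → M → Prop) (e : M) : Filter M :=
  (⨅ W ∈ {W | e ∈ W ∧ IsCone C W}, 𝓟 W) ⊓ 𝓟 {e}ᶜ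

theorem eventually_puncturedNhds_ne (C : M → M → M → Prop) (e : M) :
    ∀ᶠ x in puncturedNhds C e, x ≠ e :=
  mem_inf_of_right (mem_principal_self {e}ᶜ)

theorem IsCone.hasBasis_puncturedNhds (hC : IsCRelation C) {V : Set M} (hV : IsCone C V) {e : M}
    (he : e ∈ V) : (puncturedNhds C e).HasBasis (fun W => e ∈ W ∧ IsCone C W) (· \ {e}) := by
  have hdirected : ∀ W, (e ∈ W ∧ IsCone C W) → ∀ W', (e ∈ W' ∧ IsCone C W') →
      ∃ W'', (e ∈ W'' ∧ IsCone C W'') ∧ W'' ⊆ W ∧ W'' ⊆ W' := by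
    rintro W ⟨heW, hW⟩ W' ⟨heW', hW'⟩
    rcases hW.subset_or_subset hC hW' heW heW' with h | h
    · exact ⟨W, ⟨heW, hW⟩, subset_rfl, h⟩
    · exact ⟨W', ⟨heW', hW'⟩, h, subset_rfl⟩
  exact (hasBasis_biInf_principal' hdirected ⟨V, he, hV⟩).inf_principal {e}ᶜ

theorem IsCone.eventually_puncturedNhds_iff (hC : IsCRelation C) {V : Set M} (hV : IsCone C V)
    {e : M} (he : e ∈ V) {p : M → Prop} :
    (∀ᶠ x in puncturedNhds C e, p x) ↔
      ∃ W, IsCone C W ∧ e ∈ W ∧ W ⊆ V ∧ ∀ x ∈ W \ {e}, p x := by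
  rw [(hV.hasBasis_puncturedNhds hC he).eventually_iff]
  constructor
  · rintro ⟨W, ⟨heW, hW⟩, hp⟩
    rcases hW.subset_or_subset hC hV heW he with h | h
    · exact ⟨W, hW, heW, h, fun x hx => hp hx⟩
    · exact ⟨V, hV, he, subset_rfl, fun x hx => hp ⟨h hx.1, hx.2⟩⟩
  · rintro ⟨W, hW, heW, -, hp⟩
    exact ⟨W, ⟨heW, hW⟩, fun x hx => hp x hx⟩

theorem IsCone.ceRel_iff_eventually (hC : IsCRelation C) {V : Set M} (hV : IsCone C V)
    {e : M} (he : e ∈ V) {f g h : M → M} :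
    CeRel C V e f g h ↔ ∀ᶠ x in puncturedNhds C e, C (f x) (g x) (h x) :=
  (hV.eventually_puncturedNhds_iff hC he).symm

theorem IsCone.nceRel_iff_eventually (hC : IsCRelation C) {V : Set M} (hV : IsCone C V)
    {e : M} (he : e ∈ V) {f g h : M → M} :
    NCeRel C V e f g h ↔ ∀ᶠ x in puncturedNhds C e, ¬ C (f x) (g x) (h x) :=
  (hV.eventually_puncturedNhds_iff hC he).symm

variable {a e : M}

theorem IsCRelation.eventually_puncturedNhds_mem_cone (hC : IsCRelation C) (ha : a ≠ e) :
    ∀ᶠ x in puncturedNhds C e, C a x e :=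
  mem_inf_of_left <| mem_iInf_of_mem {x | C a x e} <|
    mem_iInf_of_mem ⟨hC.of_ne ha, a, e, ha, rfl⟩ (mem_principal_self _)

theorem IsCRelation.left_eventuallyEq (hC : IsCRelation C) (ha : a ≠ e) (b : M) :
    (fun x => C x a b) =ᶠ[puncturedNhds C e] fun _ => C e a b :=
  (hC.eventually_puncturedNhds_mem_cone ha).mono fun _ hx =>
    propext ⟨hC.congr_left hx, hC.congr_left (hC.swap hx)⟩

theorem IsCRelation.middle_eventuallyEq (hC : IsCRelation C) (ha : a ≠ e) (b : M) :
    (fun x => C a x b) =ᶠ[puncturedNhds C e] fun _ => C a e b :=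
  (hC.eventually_puncturedNhds_mem_cone ha).mono fun _ hx =>
    propext ⟨hC.trans (hC.swap hx), hC.trans hx⟩

theorem IsCRelation.eventuallyConst_eq (hC : IsCRelation C) (a e : M) :
    EventuallyConst (fun x => x = a) (puncturedNhds C e) := by
  refine eventuallyConst_pred.2 (.inr ?_)
  rcases ne_or_eq a e with ha | rfl
  · refine (hC.eventually_puncturedNhds_mem_cone ha).mono ?_
    rintro _ hx rfl
    exact hC.irrefl_left hx
  · exact eventually_puncturedNhds_ne C a

theorem IsCRelation.eventuallyConst_left (hC : IsCRelation C) (a b e : M) :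
    EventuallyConst (fun x => C x a b) (puncturedNhds C e) := by
  rcases ne_or_eq a e with ha | rfl
  · exact (EventuallyConst.const _).congr (hC.left_eventuallyEq ha b).symm
  rcases ne_or_eq b a with hb | rfl
  · simp only [hC.swap_iff (y := a)]
    exact (EventuallyConst.const _).congr (hC.left_eventuallyEq hb a).symm
  · exact eventuallyConst_pred.2 (.inl ((eventually_puncturedNhds_ne C b).mono fun _ => hC.of_ne))

theorem IsCRelation.eventuallyConst_middle (hC : IsCRelation C) (a b e : M) :
    EventuallyConst (fun x => C a x b) (puncturedNhds C e) := by
  rcases ne_or_eq a e with ha | rfl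
  · exact (EventuallyConst.const _).congr (hC.middle_eventuallyEq ha b).symm
  refine eventuallyConst_pred.2 (.inr ?_)
  rcases ne_or_eq b a with hb | rfl
  · exact (hC.eventually_puncturedNhds_mem_cone hb).mono fun x hx =>
      hC.asymm (hC.swap hx) ∘ hC.swap
  · exact .of_forall fun _ => hC.irrefl_right

theorem QFDef.eventuallyConst (hC : IsCRelation C) {s : Set M} (hs : QFDef C s) (e : M) :
    EventuallyConst (fun x => x ∈ s) (puncturedNhds C e) := by
  have of_false {p : M → Prop} (hp : ∀ x, ¬ p x) : EventuallyConst p (puncturedNhds C e) :=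
    eventuallyConst_pred.2 (.inr (.of_forall hp))
  induction hs with
  | atomC t₁ t₂ t₃ =>
    rcases t₁ with _ | a <;> rcases t₂ with _ | b <;> rcases t₃ with _ | c <;>
      simp only [mem_ofPred_eq, Option.getD_none, Option.getD_some]
    · exact of_false fun _ => hC.irrefl_left
    · exact of_false fun _ => hC.irrefl_left
    · exact of_false fun _ => hC.irrefl_right
    · exact hC.eventuallyConst_left b c e
    · simpa only [hC.diag_iff, ne_eq, eq_comm (a := a), Function.comp_def]
        using (hC.eventuallyConst_eq a e).comp Not
    · exact hC.eventuallyConst_middle a c e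
    · simpa only [hC.swap_iff (y := b)] using hC.eventuallyConst_middle a b e
    · exact .const _
  | atomEq t₁ t₂ =>
    rcases t₁ with _ | a <;> rcases t₂ with _ | b <;>
      simp only [mem_ofPred_eq, Option.getD_none, Option.getD_some]
    · exact .const _
    · exact hC.eventuallyConst_eq b e
    · simpa only [eq_comm] using hC.eventuallyConst_eq a e
    · exact .const _
  | compl _ ih => exact ih.comp Not
  | union _ _ ih ih' => exact ih.comp₂ Or ih'

end PuncturedNhds

section Definability

variable {L : FirstOrder.Language.{u, u}} [L.Structure M] {C : M → M → M → Prop}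

theorem definable_interpC (r : L.Relations 3) (A : Set M) :
    A.Definable L {t : Fin 3 → M | interpC L M r (t 0) (t 1) (t 2)} := by
  refine (Set.empty_definable_iff.2 ⟨r.formula Language.Term.var, ?_⟩).mono (empty_subset A)
  ext t
  have htuple : ![t 0, t 1, t 2] = t := by
    ext i
    fin_cases i <;> rfl
  simp only [interpC, htuple, mem_ofPred_eq, Language.Formula.realize_rel,
    Language.Term.realize_var]

theorem CMinimal.qfDef {r : L.Relations 3} (h : CMinimal L M r) {s : Set M}
    (hs : (univ : Set M).Definable₁ L s) : QFDef (interpC L M r) s :=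
  h M _ (rfl : L.completeTheory M = L.completeTheory M) s hs

theorem NiceFamily.definableFunOn (F : NiceFamily L M C) {u : M} (hu : u ∈ F.U) :
    DefinableFunOn L M F.V (F.f u) := by
  have hmap : (univ : Set M).DefinableMap L fun t : Fin 2 → M => ![u, t 0, t 1] := by
    intro i
    fin_cases i
    exacts [L.definableFun_const _ (mem_univ u), .proj L, .proj L]
  unfold DefinableFunOn
  convert F.definable.preimage_map hmap using 1
  ext t
  simp [hu]

theorem DefinableFunOn.definable₁_rel {V : Set M} {f g h : M → M}
    (hf : DefinableFunOn L M V f) (hg : DefinableFunOn L M V g) (hh : DefinableFunOn L M V h)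
    (hC : (univ : Set M).Definable L {t : Fin 3 → M | C (t 0) (t 1) (t 2)}) :
    (univ : Set M).Definable₁ L {x | x ∈ V ∧ C (f x) (g x) (h x)} := by
  have graph {k : M → M} (hk : DefinableFunOn L M V k) (i : Fin 3) :=
    hk.preimage_comp (![.inl 0, .inr i] : Fin 2 → Fin 1 ⊕ Fin 3)
  have key := ((((graph hf 0).inter (graph hg 1)).inter (graph hh 2)).inter
    (hC.preimage_comp (Sum.inr : Fin 3 → Fin 1 ⊕ Fin 3))).exists_of_finite
  unfold Set.Definable₁
  convert key using 1
  ext t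
  constructor
  · rintro ⟨ht, hrel⟩
    exact ⟨![f (t 0), g (t 0), h (t 0)], ⟨⟨⟨ht, rfl⟩, ht, rfl⟩, ht, rfl⟩, hrel⟩
  · rintro ⟨y, ⟨⟨⟨ht, hfy : f (t 0) = y 0⟩, -, hgy : g (t 0) = y 1⟩, -, hhy : h (t 0) = y 2⟩,
      hrel : C (y 0) (y 1) (y 2)⟩
    rw [← hfy, ← hgy, ← hhy] at hrel
    exact ⟨ht, hrel⟩

end Definability

section Tangents

variable {L : FirstOrder.Language.{u, u}} [L.Structure M] {C : M → M → M → Prop}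

theorem ceRel_or_nceRel (hC : IsCRelation C)
    (hdef : (univ : Set M).Definable L {t : Fin 3 → M | C (t 0) (t 1) (t 2)})
    (hqf : ∀ s : Set M, (univ : Set M).Definable₁ L s → QFDef C s)
    {V : Set M} (hV : IsCone C V) {e : M} (he : e ∈ V) {f g h : M → M}
    (hf : DefinableFunOn L M V f) (hg : DefinableFunOn L M V g) (hh : DefinableFunOn L M V h) :
    CeRel C V e f g h ∨ NCeRel C V e f g h := by
  rw [hV.ceRel_iff_eventually hC he, hV.nceRel_iff_eventually hC he]
  have hmemV : ∀ᶠ x in puncturedNhds C e, x ∈ V :=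
    (hV.eventually_puncturedNhds_iff hC he).2 ⟨V, hV, he, subset_rfl, fun _ hx => hx.1⟩
  have hconst := (hqf _ (hf.definable₁_rel hg hh hdef)).eventuallyConst hC e
  refine (Filter.eventuallyConst_pred.1 hconst).imp (fun h => h.mono fun _ hx => hx.2) fun h => ?_
  filter_upwards [h, hmemV] with x hx hxV hrel
  exact hx ⟨hxV, hrel⟩

namespace NiceFamily

theorem ceRel_iff (hC : IsCRelation C) (F : NiceFamily L M C) {u v w : M} (hu : u ∈ F.U)
    (hv : v ∈ F.U) (hw : w ∈ F.U) :
    CeRel C F.V F.e (F.f u) (F.f v) (F.f w) ↔ C u v w := by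
  have hpoint : ∀ x ∈ F.V \ {F.e}, (C u v w ↔ C (F.f u x) (F.f v x) (F.f w x)) := by
    intro x hx
    obtain ⟨_, -, -, -, hiso⟩ := F.star x hx
    exact hiso u hu v hv w hw
  constructor
  · rintro ⟨W, hW, heW, hWV, h⟩
    obtain ⟨x, hxW, hxe⟩ := hW.exists_mem_ne hC heW
    exact (hpoint x ⟨hWV hxW, hxe⟩).2 (h x ⟨hxW, hxe⟩)
  · exact fun h => ⟨F.V, F.coneV, F.he, subset_rfl, fun x hx => (hpoint x hx).1 h⟩

theorem Tangent.ceRel_of_not_tangent (hC : IsCRelation C)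
    (hdef : (univ : Set M).Definable L {t : Fin 3 → M | C (t 0) (t 1) (t 2)})
    (hqf : ∀ s : Set M, (univ : Set M).Definable₁ L s → QFDef C s)
    {F : NiceFamily L M C} {u v : M} {g : M → M} (hg : DefinableFunOn L M F.V g)
    (hv : F.Tangent v g) (hu : u ∈ F.U) (hnu : ¬ F.Tangent u g) :
    CeRel C F.V F.e (F.f u) (F.f v) g := by
  obtain ⟨w, hw, huw⟩ : ∃ w ∈ F.U, ¬ NCeRel C F.V F.e (F.f u) (F.f w) g := by
    by_contra! h
    exact hnu ⟨hu, h⟩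
  have huwg : CeRel C F.V F.e (F.f u) (F.f w) g :=
    (ceRel_or_nceRel hC hdef hqf F.coneV F.he (F.definableFunOn hu) (F.definableFunOn hw)
      hg).resolve_right huw
  have hvw := hv.2 w hw
  rw [F.coneV.ceRel_iff_eventually hC F.he] at huwg ⊢
  rw [F.coneV.nceRel_iff_eventually hC F.he] at hvw
  -- `f_v` is at least as close to `g` as `f_w`, which is closer to `g` than `f_u`.
  filter_upwards [huwg, hvw] with x hx hx'
  exact (hC.replace_middle_or_left hx _).resolve_right hx'

end NiceFamily

theorem statement15_general (hC : IsCRelation C)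
    (hdef : (univ : Set M).Definable L {t : Fin 3 → M | C (t 0) (t 1) (t 2)})
    (hqf : ∀ s : Set M, (univ : Set M).Definable₁ L s → QFDef C s)
    (F : NiceFamily L M C) {g₁ g₂ g₃ : M → M} (hg₁ : DefinableFunOn L M F.V g₁)
    (hg₃ : DefinableFunOn L M F.V g₃) (hg : CeRel C F.V F.e g₁ g₂ g₃) {u₁ u₂ u₃ : M}
    (hu₁ : F.Tangent u₁ g₁) (hu₂ : F.Tangent u₂ g₂) (hu₃ : F.Tangent u₃ g₃) :
    C u₁ u₂ u₃ ∨ F.Tangent u₁ g₃ ∨ F.Tangent u₃ g₁ := by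
  by_contra! ⟨hnot, hnot₁₃, hnot₃₁⟩
  have h₁ := hu₁.ceRel_of_not_tangent hC hdef hqf hg₁ hu₃.1 hnot₃₁
  have h₂ := hu₂.2 u₃ hu₃.1
  have h₃ := hu₃.ceRel_of_not_tangent hC hdef hqf hg₃ hu₁.1 hnot₁₃
  refine hnot ((F.ceRel_iff hC hu₁.1 hu₂.1 hu₃.1).1 ?_)
  rw [F.coneV.ceRel_iff_eventually hC F.he] at hg h₁ h₃ ⊢
  rw [F.coneV.nceRel_iff_eventually hC F.he] at h₂
  filter_upwards [hg, h₁, h₂, h₃] with x hgx hx₁ hx₂ hx₃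
  exact hC.of_approx hgx hx₁ hx₂ hx₃

end Tangents

theorem statement15 {L : FirstOrder.Language.{u, u}} {M : Type u}
    [L.Structure M] (r : L.Relations 3)
    (hC : IsCRelation (interpC L M r))
    (hmin : CMinimal L M r)
    (F G : NiceFamily L M (interpC L M r))
    (hV : G.V = F.V) (he : G.e = F.e)
    (hder : ∀ u' ∈ G.U, ∃! u : M, F.Tangent u (G.f u'))
    (d : M → M) (hd : ∀ u' ∈ G.U, F.Tangent (d u') (G.f u'))
    (a1 a2 a3 : M) (h1 : a1 ∈ G.U) (h2 : a2 ∈ G.U) (h3 : a3 ∈ G.U)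
    (hCa : interpC L M r a1 a2 a3) :
    interpC L M r (d a1) (d a2) (d a3) ∨ d a1 = d a3 := by
  refine (statement15_general hC (definable_interpC r univ) (fun _ => hmin.qfDef) F
    (hV ▸ G.definableFunOn h1) (hV ▸ G.definableFunOn h3)
    (hV ▸ he ▸ (G.ceRel_iff hC h1 h2 h3).2 hCa) (hd a1 h1) (hd a2 h2) (hd a3 h3)).imp_right ?_
  rintro (h | h)
  · exact (hder a3 h3).unique h (hd a3 h3)
  · exact (hder a1 h1).unique (hd a1 h1) h

end CMinPaper
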